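/- Let g ≥ 2 and let Σ_g be the closed orientable surface of genus g. Then the fundamental group π₁(Σ_g) = ⟨a₁,b₁,…,a_g,b_g | [a₁,b₁]⋯[a_g,b_g]⟩ has the property that for any element r ∈ π₁(Σ_g) not conjugate into the free subgroup A = ⟨a₁,b₁⟩ nor into B = ⟨a₂,b₂,…,a_g,b_g⟩, both A and B embed canonically into π₁(Σ_g)/⟨⟨r⟩⟩. -/

import Mathlib

/-- The surface relator `[a₁,b₁]⋯[a_g,b_g]` in the free group on `Fin g × Bool`,
where `(i, false)` is `aᵢ` and `(i, true)` is `bᵢ`. -/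
def surfaceRel (g : ℕ) : FreeGroup (Fin g × Bool) :=
  (List.ofFn fun i : Fin g =>
    (FreeGroup.of (i, false))⁻¹ * (FreeGroup.of (i, true))⁻¹ *
      FreeGroup.of (i, false) * FreeGroup.of (i, true)).prod


theorem hnn_core {Λ : Type} [Group Λ] (N : Subgroup Λ) [N.Normal] (S : Subgroup Λ)
    (σ : Λ →* Λ) (h0 : ∀ s ∈ S, s ∈ N → s = 1) (h1 : ∀ s ∈ S, σ s ∈ N → s = 1) :
    ∃ (H : Type) (_ : Group H) (j : Λ →* H) (t : H), (∀ v, j v = 1 ↔ v ∈ N) ∧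
      ∀ s ∈ S, t⁻¹ * j s * t = j (σ s) := by
  let q := QuotientGroup.mk' N
  let f0 : S →* Λ ⧸ N := q.comp S.subtype
  let f1 : S →* Λ ⧸ N := (q.comp σ).comp S.subtype
  have i0 : Function.Injective f0 := by
    rw [injective_iff_map_eq_one]
    rintro ⟨a, ha⟩ h
    have : a ∈ N := by simpa [f0, q] using h
    exact Subtype.ext (h0 a ha this)
  have i1 : Function.Injective f1 := by
    rw [injective_iff_map_eq_one]
    rintro ⟨a, ha⟩ h
    have : σ a ∈ N := by simpa [f1, q] using h
    exact Subtype.ext (h1 a ha this)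
  let e0 := MonoidHom.ofInjective i0
  let e1 := MonoidHom.ofInjective i1
  let φ : f1.range ≃* f0.range := e1.symm.trans e0
  refine ⟨HNNExtension (Λ ⧸ N) _ _ φ, inferInstance, HNNExtension.of.comp q, HNNExtension.t,
    ?_, ?_⟩
  · intro v
    rw [MonoidHom.comp_apply, map_eq_one_iff _ (HNNExtension.of_injective φ)]
    simp [q]
  · intro s hs
    have := HNNExtension.equiv_symm_eq_conj (φ := φ) (e0 ⟨s, hs⟩)
    have h2 : φ.symm (e0 ⟨s, hs⟩) = e1 ⟨s, hs⟩ := by simp [φ]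
    rw [h2] at this
    exact this.symm

theorem pgroup_solve {α : Type} [DecidableEq α] (c : α) (r : FreeGroup α)
    (e : FreeGroup α →* Multiplicative ℤ) (hec : e (FreeGroup.of c) = Multiplicative.ofAdd 1)
    (hex : ∀ x, x ≠ c → e (FreeGroup.of x) = 1) (p : ℕ) [hp : Fact p.Prime]
    (hpe : ¬ (p : ℤ) ∣ Multiplicative.toAdd (e r)) :
    ∀ (n : ℕ) (Q : Type) [Group Q] [Finite Q], IsPGroup p Q → Nat.card Q ≤ n →
      ∀ f : FreeGroup α →* Q, ∃ f' : FreeGroup α →* Q,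
        (∀ x, x ≠ c → f' (FreeGroup.of x) = f (FreeGroup.of x)) ∧ f' r = 1 := by
  intro n
  induction n with
  | zero =>
    intro Q _ _ _ h
    have := Nat.card_pos (α := Q)
    omega
  | succ n ih =>
    intro Q _ _ hQ hcard f
    rcases subsingleton_or_nontrivial Q with hs | hn
    · exact ⟨f, fun _ _ => rfl, Subsingleton.elim _ _⟩
    have hZ := hQ.center_nontrivial
    let Z := Subgroup.center Q
    have hlt : Nat.card (Q ⧸ Z) ≤ n := by
      have h1 := Subgroup.card_eq_card_quotient_mul_card_subgroup Z
      have h2 : 1 < Nat.card Z := Finite.one_lt_card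
      have h3 : 0 < Nat.card (Q ⧸ Z) := Nat.card_pos
      nlinarith
    obtain ⟨g, hg1, hg2⟩ := ih (Q ⧸ Z) (hQ.to_quotient Z) hlt ((QuotientGroup.mk' Z).comp f)
    obtain ⟨q, hq⟩ := QuotientGroup.mk'_surjective Z (g (FreeGroup.of c))
    let f1 : FreeGroup α →* Q := FreeGroup.lift fun x => if x = c then q else f (FreeGroup.of x)
    have hf1 : (QuotientGroup.mk' Z).comp f1 = g := by
      ext x
      by_cases hx : x = c
      · subst hx; simpa [f1] using hq
      · simpa [f1, hx] using (hg1 x hx).symm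
    have hz : f1 r ∈ Z := by
      have : (QuotientGroup.mk' Z) (f1 r) = 1 := by rw [← hg2, ← hf1]; rfl
      simpa using this
    have hcop : p.Coprime (Multiplicative.toAdd (e r)).natAbs := by
      rw [hp.out.coprime_iff_not_dvd]
      exact fun h => hpe (Int.natCast_dvd.2 h)
    obtain ⟨z, hzz⟩ : ∃ z : Z, z ^ (Multiplicative.toAdd (e r)) = (⟨f1 r, hz⟩ : Z)⁻¹ := by
      have hs := ((hQ.to_subgroup Z).powEquiv hcop).surjective
      rcases Int.natAbs_eq (Multiplicative.toAdd (e r)) with h | h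
      · obtain ⟨z, hz'⟩ := hs (⟨f1 r, hz⟩ : Z)⁻¹
        refine ⟨z, ?_⟩
        rw [h, zpow_natCast, ← hz']; rfl
      · obtain ⟨z, hz'⟩ := hs (⟨f1 r, hz⟩ : Z)
        refine ⟨z, ?_⟩
        rw [h, zpow_neg, zpow_natCast, ← hz']; rfl
    have hzc : ∀ (k : ℤ) (y : Q), (z : Q) ^ k * y = y * (z : Q) ^ k := fun k y =>
      (Subgroup.mem_center_iff.1 (Z.zpow_mem z.2 k) y).symm
    refine ⟨MonoidHom.mk' (fun v => f1 v * (z : Q) ^ (Multiplicative.toAdd (e v))) ?_, ?_, ?_⟩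
    · intro a b
      simp only [map_mul, toAdd_mul, zpow_add]
      rw [mul_assoc (f1 a) ((z : Q) ^ _), ← mul_assoc ((z : Q) ^ _) (f1 b), hzc _ (f1 b)]
      simp only [mul_assoc]
    · intro x hx
      simp [hex x hx, f1, hx]
    · have := congrArg (Subtype.val) hzz
      simp only [MonoidHom.mk'_apply]
      push_cast at this
      rw [this]; simp

/-- syllable normal form -/
theorem syllables {α : Type} [DecidableEq α] (w : FreeGroup α) : ∃ L : List (α × ℤ),
    (L.map fun s => FreeGroup.of s.1 ^ s.2).prod = w ∧ (∀ s ∈ L, s.2 ≠ 0) ∧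
    L.IsChain (fun s s' => s.1 ≠ s'.1) := by
  have key : ∀ (x : α) (k : ℤ) (L : List (α × ℤ)), k ≠ 0 → (∀ s ∈ L, s.2 ≠ 0) →
    L.IsChain (fun s s' => s.1 ≠ s'.1) → ∃ L' : List (α × ℤ),
    (L'.map fun s => FreeGroup.of s.1 ^ s.2).prod =
      FreeGroup.of x ^ k * (L.map fun s => FreeGroup.of s.1 ^ s.2).prod ∧
    (∀ s ∈ L', s.2 ≠ 0) ∧ L'.IsChain (fun s s' => s.1 ≠ s'.1) := by
    intro x k L hk h1 h2
    rcases L with _ | ⟨⟨y, m⟩, L⟩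
    · exact ⟨[(x, k)], by simp, by simpa using hk, by simp⟩
    by_cases hxy : x = y
    · subst hxy
      by_cases hm : k + m = 0
      · refine ⟨L, ?_, fun s hs => h1 s (by simp [hs]), h2.tail⟩
        simp [← mul_assoc, ← zpow_add, hm]
      · refine ⟨(x, k + m) :: L, ?_, ?_, ?_⟩
        · simp [zpow_add, mul_assoc]
        · intro s hs
          rcases List.mem_cons.1 hs with rfl | hs
          · exact hm
          · exact h1 s (by simp [hs])
        · rw [List.isChain_cons] at h2 ⊢
          exact h2
    · refine ⟨(x, k) :: (y, m) :: L, by simp, ?_, ?_⟩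
      · intro s hs
        rcases List.mem_cons.1 hs with rfl | hs
        · exact hk
        · exact h1 s hs
      · rw [List.isChain_cons_cons]
        exact ⟨hxy, h2⟩
  obtain ⟨l, rfl⟩ : ∃ l, FreeGroup.mk l = w := ⟨w.toWord, FreeGroup.mk_toWord⟩
  induction l with
  | nil => exact ⟨[], by simp [FreeGroup.one_eq_mk], by simp, by simp⟩
  | cons a l ih =>
    obtain ⟨L, hL, h1, h2⟩ := ih
    obtain ⟨x, b⟩ := a
    have hcons : FreeGroup.mk ((x, b) :: l) =
        FreeGroup.of x ^ (if b then (1 : ℤ) else -1) * FreeGroup.mk l := by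
      cases b <;> simp [FreeGroup.of, FreeGroup.inv_mk, FreeGroup.mul_mk, FreeGroup.invRev]
    rw [hcons, ← hL]
    exact key x _ L (by cases b <;> simp) h1 h2

abbrev MatP (n p : ℕ) := Matrix (Fin (n + 1)) (Fin (n + 1)) (ZMod p)

theorem residually_p {α : Type} [DecidableEq α] (w : FreeGroup α) (hw : w ≠ 1) (γ : ℤ)
    (hγ : γ ≠ 0) : ∃ p : ℕ, p.Prime ∧ ¬ (p : ℤ) ∣ γ ∧ ∃ (Q : Type) (_ : Group Q) (_ : Finite Q)
      (f : FreeGroup α →* Q), IsPGroup p Q ∧ f w ≠ 1 := by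
  obtain ⟨L, hL, hne, hch⟩ := syllables w
  have hD : (L.map Prod.snd).prod ≠ 0 := by
    rw [Ne, List.prod_eq_zero_iff]
    simpa using fun x hx => hne _ hx rfl
  obtain ⟨p, hpl, hp⟩ := Nat.exists_infinite_primes (γ * (L.map Prod.snd).prod).natAbs.succ
  have hnd : ¬ (p : ℤ) ∣ γ * (L.map Prod.snd).prod := by
    intro h
    have h1 := Int.natCast_dvd.1 h
    have := Nat.le_of_dvd (Int.natAbs_pos.2 (mul_ne_zero hγ hD)) h1
    omega
  have hnγ : ¬ (p : ℤ) ∣ γ := fun h => hnd (h.mul_right _)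
  have hnD : ¬ (p : ℤ) ∣ (L.map Prod.snd).prod := fun h => hnd (h.mul_left _)
  refine ⟨p, hp, hnγ, ?_⟩
  have : Fact p.Prime := ⟨hp⟩
  obtain ⟨n, hnL⟩ : ∃ n, n = L.length := ⟨_, rfl⟩
  let A : α → MatP n p := fun x => Matrix.of fun i j =>
    if j.1 = i.1 + 1 ∧ (L[i.1]?).map Prod.fst = some x then 1 else 0
  have hA : ∀ x, A x * A x = 0 := by
    intro x
    ext i k
    rw [Matrix.mul_apply]
    apply Finset.sum_eq_zero
    intro j _
    simp only [A, Matrix.of_apply, mul_ite, mul_one, mul_zero]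
    split_ifs with h1 h2
    · exfalso
      obtain ⟨-, h1⟩ := h1
      obtain ⟨h2, h3⟩ := h2
      rw [h2] at h1
      rw [Option.map_eq_some_iff] at h1 h3
      obtain ⟨s, hs, rfl⟩ := h3
      obtain ⟨s', hs', h5⟩ := h1
      rw [List.getElem?_eq_some_iff] at hs hs'
      obtain ⟨l1, rfl⟩ := hs
      obtain ⟨l2, rfl⟩ := hs'
      exact (List.isChain_iff_getElem.1 hch i.1 l2) h5.symm
    all_goals rfl
  let u : α → (MatP n p)ˣ := fun x => ⟨1 + A x, 1 - A x, by
    rw [mul_sub, mul_one, add_mul, hA]; simp, by rw [sub_mul, one_mul, mul_add, hA]; simp⟩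
  let f : FreeGroup α →* (MatP n p)ˣ := FreeGroup.lift u
  let strict : MatP n p → Prop := fun B => ∀ i j : Fin (n + 1), B i j ≠ 0 → i < j
  have sA : ∀ x, strict (A x) := by
    intro x i j h
    simp only [A, Matrix.of_apply, ne_eq, ite_eq_right_iff, Classical.not_imp] at h
    rw [Fin.lt_def]; omega
  have sadd : ∀ B C, strict B → strict C → strict (B + C) := by
    intro B C hB hC i j h
    by_contra hlt
    apply h
    rw [Matrix.add_apply, not_not.1 (mt (hB i j) hlt), not_not.1 (mt (hC i j) hlt), add_zero]
  have smul' : ∀ B C, strict B → strict C → strict (B * C) := by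
    intro B C hB hC i k h
    rw [Matrix.mul_apply] at h
    obtain ⟨j, -, hj⟩ := Finset.exists_ne_zero_of_sum_ne_zero h
    exact (hB i j (left_ne_zero_of_mul hj)).trans (hC j k (right_ne_zero_of_mul hj))
  have hstrict : ∀ v, strict ((f v : MatP n p) - 1) := by
    intro v
    induction v using FreeGroup.induction_on with
    | C1 => intro i j h; simp at h
    | of x => simpa [f, u] using sA x
    | inv_of x _ =>
      have : ((f (FreeGroup.of x)⁻¹ : (MatP n p)ˣ) : MatP n p) - 1 = - A x := by
        rw [map_inv]; simp [f, u]
      rw [this]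
      intro i j h
      exact sA x i j (by simpa using h)
    | mul x y hx hy =>
      have : ((f (x * y) : (MatP n p)ˣ) : MatP n p) - 1 = ((f x : MatP n p) - 1) * ((f y : MatP n p) - 1) +
        (((f x : MatP n p) - 1) + ((f y : MatP n p) - 1)) := by
        rw [map_mul, Units.val_mul]; noncomm_ring
      rw [this]
      exact sadd _ _ (smul' _ _ hx hy) (sadd _ _ hx hy)
  have hpow : ∀ B : MatP n p, strict B → ∀ k (i j : Fin (n + 1)), (B ^ k) i j ≠ 0 → i.1 + k ≤ j.1 := by
    intro B hB k
    induction k with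
    | zero =>
      intro i j h
      by_cases hij : i = j
      · simp [hij]
      · simp [hij] at h
    | succ k ih =>
      intro i l h
      rw [pow_succ, Matrix.mul_apply] at h
      obtain ⟨j, -, hj⟩ := Finset.exists_ne_zero_of_sum_ne_zero h
      have h1 := ih i j (left_ne_zero_of_mul hj)
      have h2 := hB j l (right_ne_zero_of_mul hj)
      rw [Fin.lt_def] at h2
      omega
  have : Finite (MatP n p)ˣ := Finite.of_injective (fun x : (MatP n p)ˣ => (x : MatP n p)) Units.val_injective
  refine ⟨f.range, inferInstance, inferInstance, f.rangeRestrict, ?_, ?_⟩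
  · rw [isPGroup_iff_pow_pow_eq_one]
    rintro ⟨_, v, rfl⟩
    refine ⟨n + 1, ?_⟩
    apply Subtype.ext
    apply Units.ext
    push_cast
    have h1 : (f v : MatP n p) = 1 + ((f v : MatP n p) - 1) := by abel
    rw [h1, add_pow_char_pow_of_commute p _ (Commute.one_left _), one_pow]
    have : ((f v : MatP n p) - 1) ^ p ^ (n + 1) = 0 := by
      ext i j
      by_contra h
      have h2 := hpow _ (hstrict v) _ i j h
      have h3 : n + 1 < p ^ (n + 1) := Nat.lt_pow_self hp.one_lt
      have := j.2
      omega
    rw [this, add_zero]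
  · intro h
    have h1 : f w = 1 := congrArg Subtype.val h
    have hz : ∀ x (k : ℤ), ((u x ^ k : (MatP n p)ˣ) : MatP n p) = 1 + (k : MatP n p) * A x := by
      intro x
      have hn : ∀ k : ℕ, ((u x ^ k : (MatP n p)ˣ) : MatP n p) = 1 + (k : MatP n p) * A x := by
        intro k
        induction k with
        | zero => simp
        | succ k ih =>
          rw [pow_succ, Units.val_mul, ih]
          simp only [u, add_mul, mul_add, mul_assoc, hA]
          push_cast
          noncomm_ring
      have hn' : ∀ k : ℕ, (((u x)⁻¹ ^ k : (MatP n p)ˣ) : MatP n p) = 1 - (k : MatP n p) * A x := by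
        intro k
        induction k with
        | zero => simp
        | succ k ih =>
          rw [pow_succ, Units.val_mul, ih]
          have : (((u x)⁻¹ : (MatP n p)ˣ) : MatP n p) = 1 - A x := rfl
          rw [this]
          simp only [sub_mul, mul_sub, mul_assoc, hA]
          push_cast
          noncomm_ring
      intro k
      rcases Int.eq_nat_or_neg k with ⟨m, rfl | rfl⟩
      · simpa using hn m
      · rw [zpow_neg, zpow_natCast, ← inv_pow, hn']; push_cast; noncomm_ring
    have hkey : ∀ j (hj : j ≤ n),
        (∀ m : Fin (n + 1), j < m.1 →
          ((((L.take j).map fun s => u s.1 ^ s.2).prod : (MatP n p)ˣ) : MatP n p) 0 m = 0) ∧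
        ((((L.take j).map fun s => u s.1 ^ s.2).prod : (MatP n p)ˣ) : MatP n p) 0 ⟨j, by omega⟩ =
          ((((L.take j).map Prod.snd).prod : ℤ) : ZMod p) := by
      intro j
      induction j with
      | zero =>
        intro hj
        refine ⟨fun m hm => ?_, by simp⟩
        have : (0 : Fin (n + 1)) ≠ m := by rintro rfl; simp at hm
        simp [this]
      | succ j ih =>
        intro hj
        obtain ⟨ih1, ih2⟩ := ih (by omega)
        have hjL : j < L.length := by omega
        have hent : ∀ m : Fin (n + 1),
          ((((L.take (j+1)).map fun s => u s.1 ^ s.2).prod : (MatP n p)ˣ) : MatP n p) 0 m =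
          ((((L.take j).map fun s => u s.1 ^ s.2).prod : (MatP n p)ˣ) : MatP n p) 0 m +
          (L[j].2 : ZMod p) * ∑ i, ((((L.take j).map fun s => u s.1 ^ s.2).prod : (MatP n p)ˣ) : MatP n p) 0 i *
            A L[j].1 i m := by
          intro m
          rw [List.take_add_one, List.map_append, List.prod_append]
          simp only [List.getElem?_eq_getElem hjL, Option.toList_some, List.map_cons,
            List.map_nil, List.prod_cons, List.prod_nil, mul_one, Units.val_mul, hz]
          have hsm : ((L[j].2 : ℤ) : MatP n p) * A L[j].1 = (L[j].2 : ZMod p) • A L[j].1 := by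
            rw [← zsmul_eq_mul]
            ext a b
            simp
          rw [hsm, mul_add, mul_one, Matrix.mul_smul, Matrix.add_apply, Matrix.smul_apply,
            Matrix.mul_apply, smul_eq_mul]
        refine ⟨fun m hm => ?_, ?_⟩
        · rw [hent, ih1 m (by omega), zero_add, Finset.sum_eq_zero, mul_zero]
          intro i _
          by_cases hi : j < i.1
          · rw [ih1 i hi, zero_mul]
          · have : A L[j].1 i m = 0 := by
              simp only [A, Matrix.of_apply]
              rw [if_neg]; omega
            rw [this, mul_zero]
        · rw [hent, ih1 _ (by simp), zero_add,
            Finset.sum_eq_single (⟨j, by omega⟩ : Fin (n + 1)), ih2]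
          · have : A L[j].1 ⟨j, by omega⟩ ⟨j + 1, by omega⟩ = 1 := by
              simp [A, List.getElem?_eq_getElem hjL]
            rw [this, mul_one, List.take_add_one, List.map_append, List.prod_append,
              List.getElem?_eq_getElem hjL]
            simp [mul_comm]
          · intro i _ hi
            have : A L[j].1 i ⟨j + 1, by omega⟩ = 0 := by
              simp only [A, Matrix.of_apply]
              rw [if_neg]
              rintro ⟨h, -⟩
              apply hi
              apply Fin.ext
              simp at h
              exact h.symm
            rw [this, mul_zero]
          · simp
    have htk : L.take n = L := by rw [hnL, List.take_length]
    have hfin := (hkey n le_rfl).2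
    have hfw : ((L.take n).map fun s => u s.1 ^ s.2).prod = f w := by
      rw [← hL, map_list_prod, List.map_map, htk]
      congr 1
      apply List.map_congr_left
      intro s _
      simp [f]
    rw [hfw, h1, htk] at hfin
    apply hnD
    rw [← ZMod.intCast_zmod_eq_zero_iff_dvd] at *
    rw [← hfin]
    have hn0 : n ≠ 0 := by
      intro h0
      have : L = [] := List.length_eq_zero_iff.1 (hnL.symm.trans h0)
      subst this
      exact hw (by simpa using hL.symm)
    rw [Units.val_one, Matrix.one_apply, if_neg]
    intro h
    have := congrArg Fin.val h
    simp at this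
    exact hn0 this.symm


/-- The subgroup generated by a set of letters. -/
abbrev Fs {α : Type} (s : Set α) : Subgroup (FreeGroup α) := Subgroup.closure (FreeGroup.of '' s)

theorem mk_mem_Fs {α : Type} (s : Set α) (L : List (α × Bool)) (h : ∀ a ∈ L, a.1 ∈ s) :
    FreeGroup.mk L ∈ Fs s := by
  induction L with
  | nil => exact one_mem _
  | cons a L ih =>
    have h1 : FreeGroup.mk (a :: L) = FreeGroup.mk [a] * FreeGroup.mk L := by
      simp [FreeGroup.mul_mk]
    rw [h1]
    refine mul_mem ?_ (ih fun b hb => h b (by simp [hb]))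
    have h2 : FreeGroup.of a.1 ∈ Fs s := Subgroup.subset_closure ⟨a.1, h a (by simp), rfl⟩
    obtain ⟨x, b⟩ := a
    cases b
    · have := inv_mem h2
      simpa [FreeGroup.of, FreeGroup.inv_mk, FreeGroup.invRev] using this
    · exact h2

theorem conj_filter {α : Type} (s : Set α) [DecidablePred (· ∈ s)] (L : List (α × Bool))
    (v : FreeGroup α) (hv : v ∈ Fs s) (h : IsConj v (FreeGroup.mk L)) :
    IsConj (FreeGroup.mk (L.filter fun a => a.1 ∈ s)) (FreeGroup.mk L) := by
  let π : FreeGroup α →* FreeGroup α :=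
    FreeGroup.lift fun a => if a ∈ s then FreeGroup.of a else 1
  have h1 : ∀ L : List (α × Bool), π (FreeGroup.mk L) = FreeGroup.mk (L.filter fun a => a.1 ∈ s) := by
    intro L
    induction L with
    | nil => exact map_one _
    | cons a L ih =>
      have h1 : ∀ L, FreeGroup.mk (a :: L) = FreeGroup.mk [a] * FreeGroup.mk L := by
        simp [FreeGroup.mul_mk]
      rw [h1, map_mul, ih]
      obtain ⟨x, b⟩ := a
      by_cases hx : x ∈ s
      · rw [List.filter_cons_of_pos (by simpa using hx), h1]
        congr 1
        cases b <;> simp [π, hx, FreeGroup.of, FreeGroup.inv_mk, FreeGroup.invRev]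
      · rw [List.filter_cons_of_neg (by simpa using hx)]
        cases b <;> simp [π, hx]
  have h2 : π v = v := by
    have : Fs s ≤ π.eqLocus (MonoidHom.id _) := by
      rw [Subgroup.closure_le]
      rintro _ ⟨a, ha, rfl⟩
      show π (FreeGroup.of a) = FreeGroup.of a
      simp [π, ha]
    exact this hv
  have h3 := π.map_isConj h
  rw [h2, h1] at h3
  exact h3.symm.trans h

theorem nc_conj {G : Type} [Group G] {a b : G} (h : IsConj a b) :
    Subgroup.normalClosure {a} = Subgroup.normalClosure {b} := by
  have key : ∀ {a b : G}, IsConj a b → Subgroup.normalClosure {b} ≤ Subgroup.normalClosure {a} := by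
    intro a b h
    apply Subgroup.normalClosure_le_normal
    rw [Set.singleton_subset_iff]
    obtain ⟨c, rfl⟩ := isConj_iff.1 h
    exact Subgroup.normalClosure_normal.conj_mem _
      (Subgroup.subset_normalClosure (Set.mem_singleton a)) c
  exact le_antisymm (key h.symm) (key h)

theorem nc_map {G H : Type} [Group G] [Group H] (f : G →* H) {a w : G} (ha : f a = 1)
    (hw : w ∈ Subgroup.normalClosure {a}) : f w = 1 := by
  have : Subgroup.normalClosure {a} ≤ f.ker :=
    Subgroup.normalClosure_le_normal (by simpa using ha)
  exact this hw

theorem conj_one {G H : Type} [Group G] [Group H] (f : G →* H) {a b : G} (h : IsConj a b)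
    (ha : f a = 1) : f b = 1 := by
  have := f.map_isConj h
  rw [ha] at this
  exact isConj_one_right.1 this

/-- Restriction of Magnus' theorem to relators of length less than `n`. -/
def MagnusLt (n : ℕ) : Prop := ∀ (β : Type) (s : Set β) (L : List (β × Bool)), L.length < n →
  (¬ ∃ v ∈ Fs s, IsConj v (FreeGroup.mk L)) →
  ∀ w ∈ Fs s, w ∈ Subgroup.normalClosure {FreeGroup.mk L} → w = 1

theorem magnus_zero {α : Type} (c : α) (L : List (α × Bool)) (IH : MagnusLt L.length)
    (h : ¬ ∃ v ∈ Fs {x | x ≠ c}, IsConj v (FreeGroup.mk L))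
    (e : FreeGroup α →* Multiplicative ℤ) (hec : e (FreeGroup.of c) = Multiplicative.ofAdd 1)
    (hex : ∀ x, x ≠ c → e (FreeGroup.of x) = 1) (he : e (FreeGroup.mk L) = 1) :
    ∀ w ∈ Fs {x | x ≠ c}, w ∈ Subgroup.normalClosure {FreeGroup.mk L} → w = 1 := by
  classical
  let C := FreeGroup.of c
  let ψ : FreeGroup (α × ℤ) →* FreeGroup α :=
    FreeGroup.lift fun p => C ^ (-p.2) * FreeGroup.of p.1 * C ^ p.2
  let sh : ℤ → α × ℤ → α × ℤ := fun m p => (p.1, p.2 + m)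
  have hψsh : ∀ m v, ψ (FreeGroup.map (sh m) v) = C ^ (-m) * ψ v * C ^ m := by
    intro m v
    induction v using FreeGroup.induction_on with
    | C1 => simp
    | of p =>
      have h1 : -(p.2 + m) = -m + -p.2 := by ring
      simp only [FreeGroup.map.of, ψ, FreeGroup.lift_apply_of, sh, h1, zpow_add, mul_assoc]
    | inv_of p h =>
      rw [map_inv, map_inv, h, map_inv]
      simp [mul_assoc]
    | mul x y hx hy =>
      rw [map_mul, map_mul, hx, hy, map_mul]
      simp [mul_assoc]
  have hconj : ∀ m v, IsConj (ψ (FreeGroup.map (sh m) v)) (ψ v) := by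
    intro m v
    rw [hψsh]
    refine isConj_iff.2 ⟨C ^ m, ?_⟩
    simp [mul_assoc]
  have hrew : ∀ L : List (α × Bool), ∃ (K : List ((α × ℤ) × Bool)) (l : ℤ),
      (∀ a ∈ K, a.1.1 ≠ c) ∧ K.length ≤ (L.filter fun a => a.1 ≠ c).length ∧
      FreeGroup.mk L = ψ (FreeGroup.mk K) * C ^ l := by
    intro L
    induction L with
    | nil => exact ⟨[], 0, by simp, by simp, by simp [← FreeGroup.one_eq_mk]⟩
    | cons a L ih =>
      obtain ⟨K, l, h1, h2, h3⟩ := ih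
      have hc : FreeGroup.mk (a :: L) = FreeGroup.mk [a] * FreeGroup.mk L := by
        simp [FreeGroup.mul_mk]
      obtain ⟨x, b⟩ := a
      by_cases hx : x = c
      · obtain ⟨d, hd⟩ : ∃ d : ℤ, FreeGroup.mk [(x, b)] = C ^ (-d) := by
          cases b
          · exact ⟨1, by simp [C, hx, FreeGroup.of, FreeGroup.inv_mk, FreeGroup.invRev]⟩
          · exact ⟨-1, by simp [C, hx, FreeGroup.of]⟩
        refine ⟨K.map fun a => (sh d a.1, a.2), l - d, ?_, ?_, ?_⟩
        · intro a ha
          obtain ⟨a', ha', rfl⟩ := List.mem_map.1 ha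
          exact h1 a' ha'
        · simpa [hx] using h2
        · rw [hc, h3, hd, ← FreeGroup.map.mk, hψsh]
          simp only [mul_assoc, ← zpow_add]
          congr 3
          ring
      · refine ⟨((x, 0), b) :: K, l, ?_, ?_, ?_⟩
        · intro a ha
          rcases List.mem_cons.1 ha with rfl | ha
          · exact hx
          · exact h1 a ha
        · rw [List.filter_cons_of_pos (by simpa using hx)]
          simpa using h2
        · have hc' : FreeGroup.mk (((x, (0 : ℤ)), b) :: K) =
              FreeGroup.mk [((x, (0 : ℤ)), b)] * FreeGroup.mk K := by simp [FreeGroup.mul_mk]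
          rw [hc, h3, hc', map_mul, mul_assoc]
          congr 1
          cases b <;> simp [ψ, FreeGroup.of, FreeGroup.inv_mk, FreeGroup.invRev]
  have hgood : ∃ (N : ℕ) (K : List ((α × ℤ) × Bool)),
      (∀ a ∈ K, a.1.1 ≠ c ∧ 0 ≤ a.1.2 ∧ a.1.2 < N) ∧ K.length < L.length ∧
      IsConj (ψ (FreeGroup.mk K)) (FreeGroup.mk L) := by
    obtain ⟨K, l, h1, h2, h3⟩ := hrew L
    have hl : l = 0 := by
      have h4 : e (ψ (FreeGroup.mk K)) = 1 := by
        have h5 : Fs {p : α × ℤ | p.1 ≠ c} ≤ (e.comp ψ).ker := by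
          rw [Subgroup.closure_le]
          rintro _ ⟨p, hp, rfl⟩
          simp [ψ, MonoidHom.mem_ker, hex p.1 hp]
        exact h5 (mk_mem_Fs _ K h1)
      rw [h3, map_mul, h4, one_mul, map_zpow, hec, ← ofAdd_zsmul] at he
      simpa using he
    have h5 : (L.filter fun a => a.1 ≠ c).length < L.length := by
      rw [List.length_filter_lt_length_iff_exists]
      by_contra hno
      refine h ⟨_, mk_mem_Fs _ L fun a ha => ?_, IsConj.refl _⟩
      intro hac
      exact hno ⟨a, ha, by simp [hac]⟩
    obtain ⟨m, N, hmN⟩ : ∃ (m : ℤ) (N : ℕ), ∀ a ∈ K, 0 ≤ a.1.2 + m ∧ a.1.2 + m < N := by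
      clear h1 h2 h3
      induction K with
      | nil => exact ⟨0, 0, by simp⟩
      | cons a K ih =>
        obtain ⟨m, N, hm⟩ := ih
        refine ⟨m + |a.1.2 + m|, N + 2 * (a.1.2 + m).natAbs + 1, ?_⟩
        intro b hb
        rcases List.mem_cons.1 hb with rfl | hb
        · push_cast
          have := neg_abs_le (b.1.2 + m)
          have := le_abs_self (b.1.2 + m)
          constructor <;> linarith
        · have := hm b hb
          have := abs_nonneg (a.1.2 + m)
          push_cast
          constructor <;> linarith
    refine ⟨N, K.map fun a => (sh m a.1, a.2), ?_, by simpa using h2.trans_lt h5, ?_⟩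
    · intro a ha
      obtain ⟨a', ha', rfl⟩ := List.mem_map.1 ha
      exact ⟨h1 a' ha', hmN a' ha'⟩
    · rw [← FreeGroup.map.mk, h3, hl, zpow_zero, mul_one]
      exact hconj _ _
  obtain ⟨K, hK, hKL, hKc⟩ := Nat.find_spec hgood
  have hmin := fun m => @Nat.find_min _ _ hgood m
  generalize hN : Nat.find hgood = N at *
  clear hN hrew
  rcases N with _ | M
  · exfalso
    have : K = [] := by
      rw [List.eq_nil_iff_forall_not_mem]
      intro a ha
      have := hK a ha
      push_cast at this
      omega
    subst this
    refine h ⟨1, one_mem _, ?_⟩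
    simpa [← FreeGroup.one_eq_mk] using hKc
  let s0 : Set (α × ℤ) := {p | p.1 ≠ c ∧ 0 ≤ p.2 ∧ p.2 < M}
  let s1 : Set (α × ℤ) := {p | p.1 ≠ c ∧ 1 ≤ p.2 ∧ p.2 < M + 1}
  let s2 : Set (α × ℤ) := {p | p.1 ≠ c ∧ p.2 = 0}
  have n0 : ¬ ∃ v ∈ Fs s0, IsConj v (FreeGroup.mk K) := by
    rintro ⟨v, hv, hvK⟩
    have hf := conj_filter s0 K v hv hvK
    refine hmin M (by omega) ⟨_, ?_, ?_, (ψ.map_isConj hf).trans hKc⟩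
    · intro a ha
      have := (List.mem_filter.1 ha).2
      simpa [s0] using this
    · exact (List.length_filter_le _ _).trans_lt hKL
  have n1 : ¬ ∃ v ∈ Fs s1, IsConj v (FreeGroup.mk K) := by
    rintro ⟨v, hv, hvK⟩
    have hf := conj_filter s1 K v hv hvK
    refine hmin M (by omega) ⟨(K.filter fun a => a.1 ∈ s1).map fun a => (sh (-1) a.1, a.2),
      ?_, ?_, ?_⟩
    · intro a ha
      obtain ⟨a', ha', rfl⟩ := List.mem_map.1 ha
      have := (List.mem_filter.1 ha').2
      simp only [s1, Set.mem_ofPred_eq, decide_eq_true_eq] at this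
      simp only [sh]
      refine ⟨this.1, ?_, ?_⟩ <;> omega
    · rw [List.length_map]
      exact (List.length_filter_le _ _).trans_lt hKL
    · rw [← FreeGroup.map.mk]
      exact (hconj _ _).trans ((ψ.map_isConj hf).trans hKc)
  have n2 : ¬ ∃ v ∈ Fs s2, IsConj v (FreeGroup.mk K) := by
    rintro ⟨v, hv, hvK⟩
    refine h ⟨ψ v, ?_, (ψ.map_isConj hvK).trans hKc⟩
    have : Fs s2 ≤ (Fs {x | x ≠ c}).comap ψ := by
      rw [Subgroup.closure_le]
      rintro _ ⟨⟨x, i⟩, ⟨hx, rfl⟩, rfl⟩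
      simp only [SetLike.mem_coe, Subgroup.mem_comap, ψ, FreeGroup.lift_apply_of]
      have : FreeGroup.of x ∈ Fs {x | x ≠ c} := Subgroup.subset_closure ⟨x, hx, rfl⟩
      simpa using this
    exact this hv
  have f0 := IH _ s0 K hKL n0
  have f1 := IH _ s1 K hKL n1
  have f2 := IH _ s2 K hKL n2
  obtain ⟨H, _, j, t, hj, ht⟩ := hnn_core (Subgroup.normalClosure {FreeGroup.mk K}) (Fs s0)
    (FreeGroup.map (sh 1)) f0 (by
      intro v hv hvn
      have h1 : Fs s0 ≤ (Fs s1).comap (FreeGroup.map (sh 1)) := by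
        rw [Subgroup.closure_le]
        rintro _ ⟨⟨x, i⟩, ⟨hx, hi, hi'⟩, rfl⟩
        simp only [SetLike.mem_coe, Subgroup.mem_comap, FreeGroup.map.of]
        exact Subgroup.subset_closure ⟨sh 1 (x, i), ⟨hx, by simp only [sh] at *; omega, by simp only [sh] at *; omega⟩, rfl⟩
      have h2 := f1 _ (h1 hv) hvn
      have hinj : Function.Injective (sh 1) := by
        rintro ⟨a, b⟩ ⟨a', b'⟩ hab
        simp only [sh, Prod.mk.injEq] at hab
        ext <;> simp <;> first | exact hab.1 | omega
      exact (map_eq_one_iff _ (FreeGroup.map_injective hinj)).1 h2)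
  let F : FreeGroup α →* H := FreeGroup.lift fun x => if x = c then t else j (FreeGroup.of (x, 0))
  have hFgen : ∀ x, x ≠ c → ∀ i : ℕ, i ≤ M →
      F (ψ (FreeGroup.of (x, (i : ℤ)))) = j (FreeGroup.of (x, (i : ℤ))) := by
    intro x hx i
    induction i with
    | zero => intro _; simp [ψ, F, hx]
    | succ i ih =>
      intro hi
      have h1 := ht (FreeGroup.of (x, (i : ℤ))) (Subgroup.subset_closure
        ⟨_, ⟨hx, by simp, by simp only; omega⟩, rfl⟩)
      have h2 : (FreeGroup.of (x, ((i + 1 : ℕ) : ℤ))) =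
        FreeGroup.map (sh 1) (FreeGroup.of (x, (i : ℤ))) := by simp [sh]
      rw [h2, ← h1, hψsh, ← ih (by omega)]
      simp [F, C]
  have hF : ∀ v ∈ Fs {p : α × ℤ | p.1 ≠ c ∧ 0 ≤ p.2 ∧ p.2 < ((M + 1 : ℕ) : ℤ)}, F (ψ v) = j v := by
    intro v hv
    have : Fs {p : α × ℤ | p.1 ≠ c ∧ 0 ≤ p.2 ∧ p.2 < ((M + 1 : ℕ) : ℤ)} ≤ (F.comp ψ).eqLocus j := by
      rw [Subgroup.closure_le]
      rintro _ ⟨⟨x, i⟩, ⟨hx, hi, hi'⟩, rfl⟩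
      obtain ⟨i, rfl⟩ := Int.eq_ofNat_of_zero_le hi
      exact hFgen x hx i (by simp only at hi'; omega)
    exact this hv
  have hFr : F (FreeGroup.mk L) = 1 := by
    refine conj_one F hKc ?_
    rw [hF _ (mk_mem_Fs _ K hK), hj]
    exact Subgroup.subset_normalClosure (Set.mem_singleton _)
  intro w hw hwn
  have h1 := nc_map F hFr hwn
  have h2 : Fs {x | x ≠ c} ≤ (Fs s2).map ψ := by
    rw [Subgroup.closure_le]
    rintro _ ⟨x, hx, rfl⟩
    exact ⟨FreeGroup.of (x, 0), Subgroup.subset_closure ⟨(x, 0), ⟨hx, rfl⟩, rfl⟩, by simp [ψ]⟩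
  obtain ⟨v, hv, rfl⟩ := h2 hw
  have h3 : Fs s2 ≤ Fs {p : α × ℤ | p.1 ≠ c ∧ 0 ≤ p.2 ∧ p.2 < ((M + 1 : ℕ) : ℤ)} := by
    apply Subgroup.closure_mono
    apply Set.image_mono
    rintro ⟨x, i⟩ ⟨hx, hi⟩
    simp only at hi
    exact ⟨hx, by simp [hi], by simp only [hi]; omega⟩
  rw [hF v (h3 hv), hj] at h1
  rw [f2 v hv h1, map_one]

theorem magnus_single {α : Type} (c : α) (L : List (α × Bool)) (IH : MagnusLt L.length)
    (h : ¬ ∃ v ∈ Fs {x | x ≠ c}, IsConj v (FreeGroup.mk L)) :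
    ∀ w ∈ Fs {x | x ≠ c}, w ∈ Subgroup.normalClosure {FreeGroup.mk L} → w = 1 := by
  classical
  let e : FreeGroup α →* Multiplicative ℤ :=
    FreeGroup.lift fun x => if x = c then Multiplicative.ofAdd 1 else 1
  have hec : e (FreeGroup.of c) = Multiplicative.ofAdd 1 := by simp [e]
  have hex : ∀ x, x ≠ c → e (FreeGroup.of x) = 1 := by intro x hx; simp [e, hx]
  by_cases he : e (FreeGroup.mk L) = 1
  · exact magnus_zero c L IH h e hec hex he
  · intro w hw hwn
    by_contra hw1
    obtain ⟨p, hp, hpe, Q, _, _, f, hQ, hfw⟩ := residually_p w hw1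
      (Multiplicative.toAdd (e (FreeGroup.mk L))) (by simpa using he)
    have : Fact p.Prime := ⟨hp⟩
    obtain ⟨f', hf1, hf2⟩ := pgroup_solve c _ e hec hex p hpe _ Q hQ le_rfl f
    have h1 : Fs {x | x ≠ c} ≤ f'.eqLocus f := by
      rw [Subgroup.closure_le]
      rintro _ ⟨x, hx, rfl⟩
      exact hf1 x hx
    have h2 : f' w = f w := h1 hw
    rw [nc_map f' hf2 hwn] at h2
    exact hfw h2.symm

theorem magnusLt (n : ℕ) : MagnusLt n := by
  classical
  induction n with
  | zero => intro β s L h; simp at h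
  | succ n ih =>
    intro α s L hL h
    have hex : ∃ (k : ℕ) (K : List (α × Bool)), K.length = k ∧
        IsConj (FreeGroup.mk K) (FreeGroup.mk L) := ⟨_, L, rfl, IsConj.refl _⟩
    obtain ⟨K, hK, hKc⟩ := Nat.find_spec hex
    have hle : K.length ≤ L.length := by
      rw [hK]
      exact Nat.find_min' hex ⟨L, rfl, IsConj.refl _⟩
    have hmin : ∀ K' : List (α × Bool), IsConj (FreeGroup.mk K') (FreeGroup.mk L) →
        K.length ≤ K'.length := by
      intro K' h'
      rw [hK]
      exact Nat.find_min' hex ⟨K', rfl, h'⟩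
    obtain ⟨a, ha, has⟩ : ∃ a ∈ K, a.1 ∉ s := by
      by_contra hno
      push Not at hno
      exact h ⟨_, mk_mem_Fs s K hno, hKc⟩
    rw [← nc_conj hKc]
    have hsub : Fs s ≤ Fs {x | x ≠ a.1} := by
      apply Subgroup.closure_mono
      apply Set.image_mono
      rintro x hx rfl
      exact has hx
    have hIH : MagnusLt K.length := fun β s L' h' => ih β s L' (by omega)
    intro w hw
    refine magnus_single a.1 K hIH ?_ w (hsub hw)
    rintro ⟨v, hv, hvK⟩
    have h1 := conj_filter _ K v hv hvK
    have h2 := hmin _ (h1.trans hKc)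
    have h3 : (K.filter fun b => b.1 ∈ {x | x ≠ a.1}).length < K.length := by
      rw [List.length_filter_lt_length_iff_exists]
      exact ⟨a, ha, by simp⟩
    omega

/-- Magnus' Freiheitssatz. -/
theorem magnus {α : Type} (s : Set α) (r : FreeGroup α) (h : ¬ ∃ v ∈ Fs s, IsConj v r) :
    ∀ w ∈ Fs s, w ∈ Subgroup.normalClosure {r} → w = 1 := by
  obtain ⟨L, rfl⟩ : ∃ l, FreeGroup.mk l = r := by
    classical exact ⟨r.toWord, FreeGroup.mk_toWord⟩
  exact magnusLt _ α s L (Nat.lt_succ_self _) h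


/-- `G` is presented by generators `t, b, x i` and the relation `t⁻¹ b t = b W(x)`. -/
structure Pres {G : Type} [Group G] {X : Type} (t b : G) (x : X → G) (W : FreeGroup X) : Prop where
  rel : t⁻¹ * b * t = b * FreeGroup.lift x W
  gen : Subgroup.closure ({t, b} ∪ Set.range x) = ⊤
  lift : ∀ (H : Type) [Group H] (t' b' : H) (x' : X → H),
    t'⁻¹ * b' * t' = b' * FreeGroup.lift x' W →
    ∃ f : G →* H, f t = t' ∧ f b = b' ∧ ∀ i, f (x i) = x' i

theorem pres_zero {G : Type} [Group G] {X : Type} {t b : G} {x : X → G} {W : FreeGroup X}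
    (P : Pres t b x W) (Y : Set X) (r : G)
    (hr1 : ¬ ∃ v ∈ Subgroup.closure {t, b}, IsConj v r)
    (hr2 : ¬ ∃ v ∈ Subgroup.closure (x '' Y), IsConj v r)
    (e : G →* Multiplicative ℤ) (het : e t = Multiplicative.ofAdd 1) (heb : e b = 1)
    (hex : ∀ i, e (x i) = 1) (her : e r = 1) :
    ∀ y ∈ Subgroup.closure (x '' Y), y ∈ Subgroup.normalClosure {r} → y = 1 := by
  classical
  let ψ : FreeGroup (Option (X × ℕ)) →* G :=
    FreeGroup.lift fun o => o.elim b fun p => (t ^ p.2)⁻¹ * x p.1 * t ^ p.2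
  let W0 : FreeGroup (Option (X × ℕ)) := FreeGroup.map (fun i => some (i, 0)) W
  let σ : FreeGroup (Option (X × ℕ)) →* FreeGroup (Option (X × ℕ)) :=
    FreeGroup.lift fun o => o.elim (FreeGroup.of none * W0) fun p => FreeGroup.of (some (p.1, p.2 + 1))
  let sh : Option (X × ℕ) → Option (X × ℕ) := fun o => o.map fun p => (p.1, p.2 + 1)
  let θ : FreeGroup (Option (X × ℕ)) →* FreeGroup (Option (X × ℕ)) :=
    FreeGroup.lift fun o => o.elim (FreeGroup.of none * W0) fun p => FreeGroup.of (some p)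
  let θ' : FreeGroup (Option (X × ℕ)) →* FreeGroup (Option (X × ℕ)) :=
    FreeGroup.lift fun o => o.elim (FreeGroup.of none * W0⁻¹) fun p => FreeGroup.of (some p)
  have hW0 : ∀ {H : Type} [Group H] (f : FreeGroup (Option (X × ℕ)) →* H),
      f W0 = FreeGroup.lift (fun i => f (FreeGroup.of (some (i, 0)))) W := by
    intro H _ f
    have : f.comp (FreeGroup.map (fun i => some (i, 0))) =
        FreeGroup.lift (fun i => f (FreeGroup.of (some (i, 0)))) := by
      ext i; simp
    exact DFunLike.congr_fun this W
  have hθW : θ W0 = W0 := by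
    rw [hW0 θ, ← MonoidHom.id_apply _ W0, hW0]
    simp [θ]
  have hθ'W : θ' W0 = W0 := by
    rw [hW0 θ', ← MonoidHom.id_apply _ W0, hW0]
    simp [θ']
  have hθθ' : ∀ v, θ (θ' v) = v := by
    intro v
    have : θ.comp θ' = MonoidHom.id _ := by
      ext o
      rcases o with _ | p
      · simp only [MonoidHom.comp_apply, θ', FreeGroup.lift_apply_of, Option.elim, map_mul, map_inv, hθW]
        simp [θ]
      · simp [θ, θ']
    exact DFunLike.congr_fun this v
  have hθsh : ∀ v, θ (FreeGroup.map sh v) = σ v := by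
    intro v
    have : θ.comp (FreeGroup.map sh) = σ := by
      ext o
      rcases o with _ | p
      · simp [θ, σ, sh]
      · simp [θ, σ, sh]
    exact DFunLike.congr_fun this v
  have hθ'σ : ∀ v, θ' (σ v) = FreeGroup.map sh v := by
    intro v
    have : θ'.comp σ = FreeGroup.map sh := by
      ext o
      rcases o with _ | p
      · simp only [MonoidHom.comp_apply, σ, FreeGroup.lift_apply_of, Option.elim, map_mul, hθ'W]
        simp [θ', sh]
      · simp [θ', σ, sh]
    exact DFunLike.congr_fun this v
  have hψσ : ∀ v, ψ (σ v) = t⁻¹ * ψ v * t := by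
    intro v
    induction v using FreeGroup.induction_on with
    | C1 => simp
    | of o =>
      rcases o with _ | p
      · have : ψ W0 = FreeGroup.lift x W := by
          rw [hW0 ψ]; simp [ψ]
        simp only [σ, FreeGroup.lift_apply_of, Option.elim, map_mul, this]
        simp [ψ, P.rel]
      · simp [σ, ψ, pow_succ, mul_assoc]
    | inv_of p h =>
      rw [map_inv, map_inv, h, map_inv]
      simp [mul_assoc]
    | mul x y hx hy =>
      rw [map_mul, map_mul, hx, hy, map_mul]
      simp [mul_assoc]
  have hψσn : ∀ (n : ℕ) v, ∃ v', ψ v' = (t ^ n)⁻¹ * ψ v * t ^ n := by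
    intro n v
    induction n with
    | zero => exact ⟨v, by simp⟩
    | succ n ih =>
      obtain ⟨v', h⟩ := ih
      exact ⟨σ v', by rw [hψσ, h]; simp [pow_succ, mul_assoc]⟩
  have claim : ∀ g : G, ∃ (k l : ℤ) (v : _), g = t ^ k * ψ v * t ^ l := by
    intro g
    have hg : g ∈ Subgroup.closure ({t, b} ∪ Set.range x) := by rw [P.gen]; trivial
    induction hg using Subgroup.closure_induction with
    | mem y hy =>
      rcases hy with (rfl | rfl) | ⟨i, rfl⟩
      · exact ⟨1, 0, 1, by simp⟩
      · exact ⟨0, 0, FreeGroup.of none, by simp [ψ]⟩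
      · exact ⟨0, 0, FreeGroup.of (some (i, 0)), by simp [ψ]⟩
    | one => exact ⟨0, 0, 1, by simp⟩
    | inv y _ ih =>
      obtain ⟨k, l, v, rfl⟩ := ih
      exact ⟨-l, -k, v⁻¹, by simp [mul_assoc]⟩
    | mul y z _ _ ihy ihz =>
      obtain ⟨k, l, v, rfl⟩ := ihy
      obtain ⟨k', l', v', rfl⟩ := ihz
      have h0 : t ^ k * ψ v * t ^ l * (t ^ k' * ψ v' * t ^ l') =
          t ^ k * ψ v * t ^ (l + k') * ψ v' * t ^ l' := by
        simp [zpow_add, mul_assoc]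
      rw [h0]
      obtain ⟨n, hn | hn⟩ := Int.eq_nat_or_neg (l + k')
      · obtain ⟨u, hu⟩ := hψσn n v
        refine ⟨k + n, l', u * v', ?_⟩
        rw [map_mul, hu, hn]
        simp [zpow_add, mul_assoc]
      · obtain ⟨u, hu⟩ := hψσn n v'
        refine ⟨k, -n + l', v * u, ?_⟩
        rw [map_mul, hu, hn]
        simp [zpow_add, mul_assoc]
  let s : ℕ → Set (Option (X × ℕ)) := fun N => {o | ∀ p, o = some p → p.2 < N}
  have hmono : ∀ {M N : ℕ}, M ≤ N → Fs (s M) ≤ Fs (s N) := by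
    intro M N hMN
    apply Subgroup.closure_mono
    apply Set.image_mono
    intro o ho p hp
    exact (ho p hp).trans_le hMN
  have hall : ∀ v, ∃ N, v ∈ Fs (s N) := by
    intro v
    induction v using FreeGroup.induction_on with
    | C1 => exact ⟨0, one_mem _⟩
    | of o =>
      rcases o with _ | p
      · exact ⟨0, Subgroup.subset_closure ⟨none, by intro p hp; simp at hp, rfl⟩⟩
      · exact ⟨p.2 + 1, Subgroup.subset_closure ⟨some p, by
          intro q hq; cases hq; exact Nat.lt_succ_self _, rfl⟩⟩
    | inv_of p h => exact ⟨h.choose, inv_mem h.choose_spec⟩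
    | mul x y hx hy =>
      obtain ⟨M, hM⟩ := hx
      obtain ⟨N, hN⟩ := hy
      exact ⟨max M N, mul_mem (hmono (le_max_left _ _) hM) (hmono (le_max_right _ _) hN)⟩
  have heψ : ∀ v, e (ψ v) = 1 := by
    intro v
    have : e.comp ψ = 1 := by
      ext o
      rcases o with _ | p
      · simp [ψ, heb]
      · simp [ψ, hex]
    exact DFunLike.congr_fun this v
  have hgood : ∃ N v, v ∈ Fs (s N) ∧ IsConj (ψ v) r := by
    obtain ⟨k, l, v, hv⟩ := claim r
    obtain ⟨N, hN⟩ := hall v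
    refine ⟨N, v, hN, isConj_iff.2 ⟨t ^ k, ?_⟩⟩
    have h1 := her
    rw [hv, map_mul, map_mul, heψ, map_zpow, map_zpow, het, mul_one, ← ofAdd_zsmul,
      ← ofAdd_zsmul] at h1
    have h2 : k + l = 0 := by
      have := congrArg Multiplicative.toAdd h1
      simpa using this
    have h3 : l = -k := by omega
    rw [hv, h3, zpow_neg]
  obtain ⟨v, hv, hvr⟩ := Nat.find_spec hgood
  have hmin := fun m => @Nat.find_min _ _ hgood m
  generalize hN : Nat.find hgood = N at *
  clear hN claim
  rcases N with _ | M
  · exfalso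
    refine hr1 ⟨ψ v, ?_, hvr⟩
    have : Fs (s 0) ≤ (Subgroup.closure {t, b}).comap ψ := by
      rw [Subgroup.closure_le]
      rintro _ ⟨o, ho, rfl⟩
      rcases o with _ | p
      · show ψ (FreeGroup.of none) ∈ Subgroup.closure {t, b}
        have : b ∈ Subgroup.closure {t, b} := Subgroup.subset_closure (by simp)
        simpa [ψ] using this
      · exact absurd (ho p rfl) (by omega)
    exact this hv
  have n0 : ¬ ∃ u ∈ Fs (s M), IsConj u v := by
    rintro ⟨u, hu, huv⟩
    exact hmin M (by omega) ⟨u, hu, (ψ.map_isConj huv).trans hvr⟩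
  have n1 : ¬ ∃ u ∈ Fs (sh '' s M), IsConj u (θ' v) := by
    rintro ⟨u, hu, huv⟩
    have h1 : Fs (sh '' s M) ≤ (Fs (s M)).map (FreeGroup.map sh) := by
      rw [Subgroup.closure_le]
      rintro _ ⟨_, ⟨o, ho, rfl⟩, rfl⟩
      exact ⟨FreeGroup.of o, Subgroup.subset_closure ⟨o, ho, rfl⟩, by simp⟩
    obtain ⟨u, hu', rfl⟩ := h1 hu
    have h2 := θ.map_isConj huv
    rw [hθsh, hθθ'] at h2
    refine hmin M (by omega) ⟨u, hu', IsConj.trans ?_ ((ψ.map_isConj h2).trans hvr)⟩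
    rw [hψσ]
    exact isConj_iff.2 ⟨t⁻¹, by simp⟩
  let s2 : Set (Option (X × ℕ)) := {o | ∃ i ∈ Y, o = some (i, 0)}
  have n2 : ¬ ∃ u ∈ Fs s2, IsConj u v := by
    rintro ⟨u, hu, huv⟩
    refine hr2 ⟨ψ u, ?_, (ψ.map_isConj huv).trans hvr⟩
    have : Fs s2 ≤ (Subgroup.closure (x '' Y)).comap ψ := by
      rw [Subgroup.closure_le]
      rintro _ ⟨_, ⟨i, hi, rfl⟩, rfl⟩
      show ψ (FreeGroup.of _) ∈ Subgroup.closure (x '' Y)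
      have : x i ∈ Subgroup.closure (x '' Y) := Subgroup.subset_closure ⟨i, hi, rfl⟩
      simpa [ψ] using this
    exact this hu
  obtain ⟨H, _, j, tH, hj, ht⟩ := hnn_core (Subgroup.normalClosure {v}) (Fs (s M)) σ
    (magnus _ v n0) (by
      intro u hu hun
      have hinj : Function.Injective sh := by
        apply Option.map_injective
        rintro ⟨a, b⟩ ⟨a', b'⟩ hab
        simpa using hab
      have h1 : FreeGroup.map sh u ∈ Fs (sh '' s M) := by
        have : Fs (s M) ≤ (Fs (sh '' s M)).comap (FreeGroup.map sh) := by
          rw [Subgroup.closure_le]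
          rintro _ ⟨o, ho, rfl⟩
          show FreeGroup.map sh (FreeGroup.of o) ∈ Fs (sh '' s M)
          rw [FreeGroup.map.of]
          exact Subgroup.subset_closure ⟨_, ⟨o, ho, rfl⟩, rfl⟩
        exact this hu
      have h2 : FreeGroup.map sh u ∈ Subgroup.normalClosure {θ' v} := by
        have : Subgroup.normalClosure {v} ≤ (Subgroup.normalClosure {θ' v}).comap θ' := by
          apply Subgroup.normalClosure_le_normal
          rw [Set.singleton_subset_iff]
          exact Subgroup.subset_normalClosure (Set.mem_singleton _)
        rw [← hθ'σ]
        exact this hun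
      exact (map_eq_one_iff _ (FreeGroup.map_injective hinj)).1 (magnus _ _ n1 _ h1 h2))
  obtain ⟨F, hFt, hFb, hFx⟩ := P.lift H tH (j (FreeGroup.of none))
    (fun i => j (FreeGroup.of (some (i, 0)))) (by
      rw [ht _ (Subgroup.subset_closure ⟨none, by intro p hp; simp at hp, rfl⟩), ← hW0 j, ← map_mul]
      simp [σ])
  have hFgen : ∀ i (n : ℕ), n ≤ M →
      F (ψ (FreeGroup.of (some (i, n)))) = j (FreeGroup.of (some (i, n))) := by
    intro i n
    induction n with
    | zero => intro _; simp [ψ, hFx]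
    | succ n ih =>
      intro hn
      have h1 := ht (FreeGroup.of (some (i, n))) (Subgroup.subset_closure
        ⟨_, by intro p hp; cases hp; exact hn, rfl⟩)
      have h2 : FreeGroup.of (some (i, n + 1)) = σ (FreeGroup.of (some (i, n))) := by simp [σ]
      rw [h2, ← h1, hψσ, ← ih (by omega)]
      simp [hFt]
  have hF : ∀ u ∈ Fs (s (M + 1)), F (ψ u) = j u := by
    intro u hu
    have : Fs (s (M + 1)) ≤ (F.comp ψ).eqLocus j := by
      rw [Subgroup.closure_le]
      rintro _ ⟨o, ho, rfl⟩
      rcases o with _ | ⟨i, n⟩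
      · show F (ψ _) = j _
        simp [ψ, hFb]
      · exact hFgen i n (by have := ho _ rfl; simp only at this; omega)
    exact this hu
  have hFr : F r = 1 := by
    refine conj_one F hvr ?_
    rw [hF _ hv, hj]
    exact Subgroup.subset_normalClosure (Set.mem_singleton _)
  intro w hw hwn
  have h1 := nc_map F hFr hwn
  have h2 : Subgroup.closure (x '' Y) ≤ (Fs s2).map ψ := by
    rw [Subgroup.closure_le]
    rintro _ ⟨i, hi, rfl⟩
    exact ⟨FreeGroup.of (some (i, 0)), Subgroup.subset_closure ⟨_, ⟨i, hi, rfl⟩, rfl⟩, by simp [ψ]⟩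
  obtain ⟨u, hu, rfl⟩ := h2 hw
  have h3 : Fs s2 ≤ Fs (s (M + 1)) := by
    apply Subgroup.closure_mono
    apply Set.image_mono
    rintro _ ⟨i, hi, rfl⟩ p hp
    cases hp
    exact Nat.succ_pos _
  rw [hF u (h3 hu), hj] at h1
  rw [magnus _ v n2 u hu h1, map_one]

theorem pres_left {G : Type} [Group G] {X : Type} {t b : G} {x : X → G} {W : FreeGroup X}
    (P : Pres t b x W) (k : ℤ) : Pres (b ^ k * t) b x W where
  rel := by
    rw [← P.rel]
    have h : (b ^ k)⁻¹ * b * b ^ k = b := by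
      rw [mul_assoc, ← zpow_one_add, add_comm, zpow_add_one, inv_mul_cancel_left]
    calc (b ^ k * t)⁻¹ * b * (b ^ k * t) = t⁻¹ * ((b ^ k)⁻¹ * b * b ^ k) * t := by
          simp [mul_assoc]
      _ = _ := by rw [h]
  gen := by
    rw [eq_top_iff, ← P.gen, Subgroup.closure_le]
    have hb : b ∈ Subgroup.closure ({b ^ k * t, b} ∪ Set.range x) :=
      Subgroup.subset_closure (by simp)
    have ht : b ^ k * t ∈ Subgroup.closure ({b ^ k * t, b} ∪ Set.range x) :=
      Subgroup.subset_closure (by simp)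
    rintro y ((rfl | rfl) | ⟨i, rfl⟩)
    · have := mul_mem (inv_mem (zpow_mem hb k)) ht
      rwa [inv_mul_cancel_left] at this
    · exact hb
    · exact Subgroup.subset_closure (by simp)
  lift := by
    intro H _ t' b' x' h
    obtain ⟨f, h1, h2, h3⟩ := P.lift H ((b' ^ k)⁻¹ * t') b' x' (by
      rw [← h]
      have h : b' ^ k * b' * (b' ^ k)⁻¹ = b' := by
        rw [← zpow_add_one, add_comm, zpow_one_add, mul_inv_cancel_right]
      calc ((b' ^ k)⁻¹ * t')⁻¹ * b' * ((b' ^ k)⁻¹ * t')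
          = t'⁻¹ * (b' ^ k * b' * (b' ^ k)⁻¹) * t' := by simp [mul_assoc]
        _ = _ := by rw [h])
    exact ⟨f, by simp [h1, h2], h2, h3⟩

theorem pres_right {G : Type} [Group G] {X : Type} {t b : G} {x : X → G} {W : FreeGroup X}
    (P : Pres t b x W) (k : ℤ) : Pres t (t ^ k * b) x W where
  rel := by
    rw [mul_assoc (t ^ k), ← P.rel]
    simp only [← mul_assoc]
    rw [← zpow_neg_one, ← zpow_add, ← zpow_add, add_comm]
  gen := by
    rw [eq_top_iff, ← P.gen, Subgroup.closure_le]
    have hb : t ∈ Subgroup.closure ({t, t ^ k * b} ∪ Set.range x) :=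
      Subgroup.subset_closure (by simp)
    have ht : t ^ k * b ∈ Subgroup.closure ({t, t ^ k * b} ∪ Set.range x) :=
      Subgroup.subset_closure (by simp)
    rintro y ((rfl | rfl) | ⟨i, rfl⟩)
    · exact hb
    · have := mul_mem (inv_mem (zpow_mem hb k)) ht
      rwa [inv_mul_cancel_left] at this
    · exact Subgroup.subset_closure (by simp)
  lift := by
    intro H _ t' b' x' h
    obtain ⟨f, h1, h2, h3⟩ := P.lift H t' ((t' ^ k)⁻¹ * b') x' (by
      rw [mul_assoc (t' ^ k)⁻¹, ← h]
      simp only [← mul_assoc]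
      rw [← zpow_neg, ← zpow_neg_one, ← zpow_add, ← zpow_add, add_comm])
    exact ⟨f, h1, by simp [h1, h2], h3⟩

theorem pres_euclid {G : Type} [Group G] {X : Type} {x : X → G} {W : FreeGroup X}
    (Y : Set X) (r : G) (hr2 : ¬ ∃ v ∈ Subgroup.closure (x '' Y), IsConj v r) (n : ℕ) :
    ∀ (t b : G), Pres t b x W → (¬ ∃ v ∈ Subgroup.closure {t, b}, IsConj v r) →
    ∀ (e f : G →* Multiplicative ℤ), e t = Multiplicative.ofAdd 1 → e b = 1 → (∀ i, e (x i) = 1) →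
    f t = 1 → f b = Multiplicative.ofAdd 1 → (∀ i, f (x i) = 1) →
    (Multiplicative.toAdd (e r)).natAbs = n →
    ∀ y ∈ Subgroup.closure (x '' Y), y ∈ Subgroup.normalClosure {r} → y = 1 := by
  induction n using Nat.strong_induction_on with
  | _ n IH =>
  intro t b P hr1 e f het heb hex hft hfb hfx hn
  by_cases her : e r = 1
  · exact pres_zero P Y r hr1 hr2 e het heb hex her
  obtain ⟨p, hp⟩ : ∃ p : ℤ, e r = Multiplicative.ofAdd p := ⟨Multiplicative.toAdd (e r), rfl⟩
  obtain ⟨q, hq⟩ : ∃ q : ℤ, f r = Multiplicative.ofAdd q := ⟨Multiplicative.toAdd (f r), rfl⟩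
  have hp0 : p ≠ 0 := by
    rintro rfl
    exact her hp
  rw [hp, toAdd_ofAdd] at hn
  let k : ℤ := (q - 1) / p
  let q' : ℤ := q - k * p
  let m : ℤ := p / q'
  have hq' : q' = (q - 1) % p + 1 := by
    have := Int.emod_add_ediv_mul (q - 1) p
    simp only [q', k]
    linarith
  have hq1 : 0 < q' := by
    have := Int.emod_nonneg (q - 1) hp0
    omega
  have hq2 : q' ≤ |p| := by
    have := Int.emod_lt_abs (q - 1) hp0
    omega
  have hp' : p - m * q' = p % q' := by
    have := Int.emod_add_ediv_mul p q'
    simp only [m]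
    linarith
  have hp1 := Int.emod_nonneg p hq1.ne'
  have hp2 := Int.emod_lt_of_pos p hq1
  let f1 : G →* Multiplicative ℤ := f * (e ^ k)⁻¹
  let e1 : G →* Multiplicative ℤ := e * (f1 ^ m)⁻¹
  have f1a : ∀ y, f1 y = f y * (e y ^ k)⁻¹ := fun y => rfl
  have e1a : ∀ y, e1 y = e y * (f1 y ^ m)⁻¹ := fun y => rfl
  have f1t : f1 (b ^ k * t) = 1 := by
    simp [f1a, hft, hfb, heb, het]
  have f1b : f1 b = Multiplicative.ofAdd 1 := by simp [f1a, hfb, heb]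
  have f1r : f1 r = Multiplicative.ofAdd q' := by
    rw [f1a, hp, hq, ← ofAdd_zsmul, ← ofAdd_neg, ← ofAdd_add]
    simp [q', sub_eq_add_neg]
  have e1r : e1 r = Multiplicative.ofAdd (p - m * q') := by
    rw [e1a, hp, f1r, ← ofAdd_zsmul, ← ofAdd_neg, ← ofAdd_add]
    simp [sub_eq_add_neg]
  refine IH (Multiplicative.toAdd (e1 r)).natAbs ?_ (b ^ k * t) ((b ^ k * t) ^ m * b)
    (pres_right (pres_left P k) m) ?_ e1 f1 ?_ ?_ ?_ f1t ?_ ?_ rfl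
  · rw [e1r, toAdd_ofAdd, hp', ← hn]
    zify
    rw [abs_of_nonneg hp1]
    exact hp2.trans_le hq2
  · rintro ⟨v, hv, hvr⟩
    refine hr1 ⟨v, ?_, hvr⟩
    have hb : b ∈ Subgroup.closure {t, b} := Subgroup.subset_closure (by simp)
    have ht : t ∈ Subgroup.closure {t, b} := Subgroup.subset_closure (by simp)
    have h1 := mul_mem (zpow_mem hb k) ht
    have h2 := mul_mem (zpow_mem h1 m) hb
    have : Subgroup.closure {b ^ k * t, (b ^ k * t) ^ m * b} ≤ Subgroup.closure {t, b} := by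
      rw [Subgroup.closure_le]
      rintro y (rfl | rfl)
      · exact h1
      · exact h2
    exact this hv
  · rw [e1a, f1t]; simp [het, heb]
  · rw [e1a, map_mul f1, map_zpow, f1t, f1b]; simp [het, heb, ← ofAdd_zsmul]
  · intro i; simp [e1a, f1a, hex, hfx]
  · rw [map_mul, map_zpow, f1t, f1b]; simp
  · intro i; simp [f1a, hex, hfx]

theorem pres_main {G : Type} [Group G] {X : Type} {t b : G} {x : X → G} {W : FreeGroup X}
    (P : Pres t b x W) (Y : Set X) (r : G)
    (hr1 : ¬ ∃ v ∈ Subgroup.closure {t, b}, IsConj v r)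
    (hr2 : ¬ ∃ v ∈ Subgroup.closure (x '' Y), IsConj v r) :
    ∀ y ∈ Subgroup.closure (x '' Y), y ∈ Subgroup.normalClosure {r} → y = 1 := by
  have h1 : FreeGroup.lift (fun _ : X => (1 : Multiplicative ℤ)) W = 1 := by
    have : FreeGroup.lift (fun _ : X => (1 : Multiplicative ℤ)) = 1 := by ext i; simp
    rw [this]; rfl
  obtain ⟨e, e1, e2, e3⟩ := P.lift (Multiplicative ℤ) (Multiplicative.ofAdd 1) 1 (fun _ => 1)
    (by rw [h1]; simp)
  obtain ⟨f, f1, f2, f3⟩ := P.lift (Multiplicative ℤ) 1 (Multiplicative.ofAdd 1) (fun _ => 1)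
    (by rw [h1]; simp)
  exact pres_euclid Y r hr2 _ t b P hr1 e f e1 e2 e3 f1 f2 f3 rfl

theorem lift_surfaceRel {H : Type} [Group H] (g : ℕ) (h : Fin g × Bool → H) :
    FreeGroup.lift h (surfaceRel g) = (List.ofFn fun i : Fin g =>
      (h (i, false))⁻¹ * (h (i, true))⁻¹ * h (i, false) * h (i, true)).prod := by
  rw [surfaceRel, map_list_prod, List.map_ofFn]
  congr 2
  ext i
  simp

theorem pres_surface (m : ℕ) (E : Fin (m + 1) ≃ Option (Fin m))
    (hE : ∀ (H : Type) [Group H] (h : Fin (m + 1) × Bool → H),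
      FreeGroup.lift h (surfaceRel (m + 1)) = 1 ↔
      (h (E.symm none, false))⁻¹ * h (E.symm none, true) * h (E.symm none, false) =
      h (E.symm none, true) * FreeGroup.lift (fun p => h (E.symm (some p.1), p.2)) (surfaceRel m)) :
    Pres (G := PresentedGroup {surfaceRel (m + 1)}) (PresentedGroup.of (E.symm none, false))
      (PresentedGroup.of (E.symm none, true))
      (fun p : Fin m × Bool => PresentedGroup.of (E.symm (some p.1), p.2)) (surfaceRel m) where
  rel := by
    refine (hE _ (PresentedGroup.of (rels := {surfaceRel (m + 1)}))).1 ?_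
    have : FreeGroup.lift (PresentedGroup.of (rels := {surfaceRel (m + 1)})) =
        PresentedGroup.mk {surfaceRel (m + 1)} := by
      ext i; simp [PresentedGroup.of]
    rw [this]
    exact PresentedGroup.one_of_mem (Set.mem_singleton _)
  gen := by
    rw [eq_top_iff, ← PresentedGroup.closure_range_of, Subgroup.closure_le]
    rintro _ ⟨⟨i, β⟩, rfl⟩
    apply Subgroup.subset_closure
    obtain ⟨o, rfl⟩ := E.symm.surjective i
    rcases o with _ | j
    · left
      cases β <;> simp
    · right
      exact ⟨(j, β), rfl⟩
  lift := by
    intro H _ t' b' x' hrel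
    let h : Fin (m + 1) × Bool → H :=
      fun p => (E p.1).elim (cond p.2 b' t') (fun j => x' (j, p.2))
    have h1 : FreeGroup.lift h (surfaceRel (m + 1)) = 1 := by
      rw [hE]
      simpa [h] using hrel
    refine ⟨PresentedGroup.toGroup (f := h) (by simpa using h1), ?_, ?_, ?_⟩
    · simp [h]
    · simp [h]
    · intro i; simp [h]

theorem injOn_of {G : Type} [Group G] (N S : Subgroup G) [N.Normal]
    (h : ∀ y ∈ S, y ∈ N → y = 1) : Set.InjOn (QuotientGroup.mk' N) S := by
  intro a ha b hb hab
  have h1 : a⁻¹ * b ∈ N := QuotientGroup.eq.1 hab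
  exact inv_mul_eq_one.1 (h _ (mul_mem (inv_mem ha) hb) h1)

/-- The Freiheitssatz instance for closed orientable surface groups of genus `g ≥ 2`:
if `r ∈ π₁(Σ_g)` is not conjugate into `A = ⟨a₁,b₁⟩` nor into
`B = ⟨a₂,b₂,…,a_g,b_g⟩`, then `A` and `B` embed canonically into `π₁(Σ_g)/⟨⟨r⟩⟩`. -/
theorem surface_group_freiheitssatz (g : ℕ) (hg : 2 ≤ g)
    (r : PresentedGroup ({surfaceRel g} : Set (FreeGroup (Fin g × Bool))))
    (hrA : ¬ ∃ x ∈ Subgroup.closure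
        {y : PresentedGroup ({surfaceRel g} : Set (FreeGroup (Fin g × Bool))) |
          ∃ b : Bool, y = PresentedGroup.of ((⟨0, by omega⟩ : Fin g), b)},
        IsConj x r)
    (hrB : ¬ ∃ x ∈ Subgroup.closure
        {y : PresentedGroup ({surfaceRel g} : Set (FreeGroup (Fin g × Bool))) |
          ∃ (i : Fin g) (b : Bool), (i : ℕ) ≠ 0 ∧ y = PresentedGroup.of (i, b)},
        IsConj x r) :
    Set.InjOn (QuotientGroup.mk' (Subgroup.normalClosure {r}))
      (Subgroup.closure
        {y : PresentedGroup ({surfaceRel g} : Set (FreeGroup (Fin g × Bool))) |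
          ∃ b : Bool, y = PresentedGroup.of ((⟨0, by omega⟩ : Fin g), b)}) ∧
    Set.InjOn (QuotientGroup.mk' (Subgroup.normalClosure {r}))
      (Subgroup.closure
        {y : PresentedGroup ({surfaceRel g} : Set (FreeGroup (Fin g × Bool))) |
          ∃ (i : Fin g) (b : Bool), (i : ℕ) ≠ 0 ∧ y = PresentedGroup.of (i, b)}) := by
  obtain ⟨m, rfl⟩ : ∃ m, g = m + 1 := ⟨g - 1, by omega⟩
  constructor
  · apply injOn_of
    have P := pres_surface m finSuccEquivLast (by
      intro H _ h
      rw [lift_surfaceRel, lift_surfaceRel, List.ofFn_succ', List.concat_eq_append, List.prod_append]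
      simp only [finSuccEquivLast_symm_none, finSuccEquivLast_symm_some, List.prod_singleton]
      rw [mul_eq_one_iff_eq_inv, ← inv_mul_eq_iff_eq_mul, eq_comm]
      simp [mul_assoc])
    have hS : {y : PresentedGroup {surfaceRel (m + 1)} |
          ∃ b : Bool, y = PresentedGroup.of ((⟨0, by omega⟩ : Fin (m + 1)), b)} =
        (fun p : Fin m × Bool => PresentedGroup.of (finSuccEquivLast.symm (some p.1), p.2)) ''
          {p | (p.1 : ℕ) = 0} := by
      ext y
      constructor
      · rintro ⟨b, rfl⟩
        exact ⟨(⟨0, by omega⟩, b), rfl, by simp⟩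
      · rintro ⟨⟨⟨i, hi⟩, b⟩, hp, rfl⟩
        simp only [Set.mem_ofPred_eq] at hp
        subst hp
        exact ⟨b, by simp⟩
    rw [hS] at hrA ⊢
    refine pres_main P _ r ?_ hrA
    rintro ⟨v, hv, hvr⟩
    refine hrB ⟨v, ?_, hvr⟩
    refine Subgroup.closure_mono ?_ hv
    rintro y (rfl | rfl)
    · exact ⟨_, _, by simp; omega, rfl⟩
    · exact ⟨_, _, by simp; omega, rfl⟩
  · apply injOn_of
    have P := pres_surface m (finSuccEquiv m) (by
      intro H _ h
      rw [lift_surfaceRel, lift_surfaceRel, List.ofFn_succ, List.prod_cons]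
      simp only [finSuccEquiv_symm_none, finSuccEquiv_symm_some]
      rw [mul_eq_one_iff_inv_eq, ← inv_mul_eq_iff_eq_mul]
      simp [mul_assoc])
    have hS : {y : PresentedGroup {surfaceRel (m + 1)} |
          ∃ (i : Fin (m + 1)) (b : Bool), (i : ℕ) ≠ 0 ∧ y = PresentedGroup.of (i, b)} =
        (fun p : Fin m × Bool => PresentedGroup.of ((finSuccEquiv m).symm (some p.1), p.2)) ''
          Set.univ := by
      ext y
      constructor
      · rintro ⟨i, b, hi, rfl⟩
        obtain ⟨j, rfl⟩ := Fin.exists_succ_eq.2 (fun h0 : i = 0 => hi (by simp [h0]))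
        exact ⟨(j, b), trivial, by simp⟩
      · rintro ⟨⟨i, b⟩, _, rfl⟩
        exact ⟨i.succ, b, by simp, by simp⟩
    rw [hS] at hrB ⊢
    refine pres_main P _ r ?_ hrB
    rintro ⟨v, hv, hvr⟩
    refine hrA ⟨v, ?_, hvr⟩
    refine Subgroup.closure_mono ?_ hv
    rintro y (rfl | rfl)
    · exact ⟨false, by simp⟩
    · exact ⟨true, by simp⟩
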